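/- Fix d ≥ 2 and X₀, Y₀ ∈ S^{d−1}. There exists a coupling of two Kac walks on the sphere started at X₀ and Y₀, i.e., a stochastic process (X_t, Y_t)_{t≥0} on a common probability space with X₀, Y₀ as given, such that each of (X_t) and (Y_t) separately has the law of the Kac walk on S^{d−1} started at its initial point, and for every t ≥ 0, E[ Σ_{i=1}^d (X_t[i]² − Y_t[i]²)² ] ≤ 2 (1 − 1/(2d))^t ≤ 2 e^{−t/(2d)}. -/

import Mathlib

noncomputable section

open MeasureTheory Real
open scoped ENNReal

namespace KacJL

instance matrixMeasurableSpace {m n : Type*} : MeasurableSpace (Matrix m n ℝ) :=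
  inferInstanceAs (MeasurableSpace (m → n → ℝ))

/-- The rotation by angle `θ` in the `(i,j)` coordinate plane of `ℝ^d`. -/
def rotM (d : ℕ) (i j : Fin d) (θ : ℝ) : Matrix (Fin d) (Fin d) ℝ :=
  Matrix.of fun k l =>
    if k = i ∧ l = i then Real.cos θ
    else if k = i ∧ l = j then -Real.sin θ
    else if k = j ∧ l = i then Real.sin θ
    else if k = j ∧ l = j then Real.cos θ
    else if k = l then 1 else 0

/-- The uniform distribution on pairs of distinct coordinates in `Fin d`. -/
def pairUniform (d : ℕ) : Measure (Fin d × Fin d) :=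
  ((d * (d - 1) : ℕ) : ℝ≥0∞)⁻¹ •
    (Measure.count.restrict {p : Fin d × Fin d | p.1 ≠ p.2})

/-- The uniform distribution on `[0, 2π)`. -/
def angleUniform : Measure ℝ :=
  (ENNReal.ofReal (2 * Real.pi))⁻¹ • (volume.restrict (Set.Ico 0 (2 * Real.pi)))

/-- The distribution of the update variables of one step of the Kac walk. -/
def kacParam (d : ℕ) : Measure ((Fin d × Fin d) × ℝ) :=
  (pairUniform d).prod angleUniform

/-- The product `R_{i_T,j_T,θ_T} ⋯ R_{i_1,j_1,θ_1}` of the rotations determined by the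
update variables `ω`. -/
def kacMatrix {d T : ℕ} (ω : Fin T → (Fin d × Fin d) × ℝ) : Matrix (Fin d) (Fin d) ℝ :=
  ((List.ofFn fun t => rotM d (ω t).1.1 (ω t).1.2 (ω t).2).reverse).prod

/-- The product of the first `s` rotations determined by the update variables `ω`
(rotations with index `≥ s` are replaced by the identity). -/
def prodUpTo {d T : ℕ} (ω : Fin T → (Fin d × Fin d) × ℝ) (s : ℕ) :
    Matrix (Fin d) (Fin d) ℝ :=
  ((List.ofFn fun u : Fin T =>
      if (u : ℕ) < s then rotM d (ω u).1.1 (ω u).1.2 (ω u).2 else 1).reverse).prod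

/-- The law of the path `(X_0, X_1, …, X_T)` of the Kac walk on the sphere started
at `x₀`. -/
def kacPathLaw (d T : ℕ) (x₀ : Fin d → ℝ) : Measure (Fin (T + 1) → Fin d → ℝ) :=
  Measure.map (fun ω : Fin T → (Fin d × Fin d) × ℝ =>
      fun s : Fin (T + 1) => (prodUpTo ω (s : ℕ)).mulVec x₀)
    (Measure.pi fun _ : Fin T => kacParam d)

lemma angle_preserving (s : ℝ) :
    MeasurePreserving (fun θ : ℝ => toIcoMod Real.two_pi_pos 0 (θ + s)) angleUniform
      angleUniform := by
  have hm : ∀ c : ℝ, Measurable (fun θ : ℝ => toIcoMod Real.two_pi_pos 0 (θ + c)) := by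
    intro c
    simp only [toIcoMod_eq_fract_mul]
    fun_prop
  refine MeasurePreserving.smul_measure ?_ _
  refine ⟨hm s, ?_⟩
  ext A hA
  rw [Measure.map_apply (hm s) hA]
  have : Fact (0 < 2 * Real.pi) := ⟨Real.two_pi_pos⟩
  let g : AddCircle (2 * Real.pi) → ℝ≥0∞ := fun b =>
    A.indicator 1 ((AddCircle.equivIco (2 * Real.pi) 0 b : ℝ))
  have hg : ∀ θ : ℝ, g (θ : AddCircle (2 * Real.pi)) =
      A.indicator 1 (toIcoMod Real.two_pi_pos 0 θ) := fun θ => rfl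
  have key : ∀ c : ℝ, ∫⁻ θ in Set.Ico 0 (2 * Real.pi),
      A.indicator 1 (toIcoMod Real.two_pi_pos 0 (θ + c)) = ∫⁻ b, g b := by
    intro c
    rw [restrict_Ico_eq_restrict_Ioc]
    have h := AddCircle.lintegral_preimage (2 * Real.pi) 0 (fun b => g (b + (c : ℝ)))
    rw [lintegral_add_right_eq_self g] at h
    rw [← h, zero_add]
    rfl
  have h1 : (volume.restrict (Set.Ico 0 (2 * Real.pi)))
      ((fun θ : ℝ => toIcoMod Real.two_pi_pos 0 (θ + s)) ⁻¹' A) = ∫⁻ b, g b := by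
    rw [← key s, ← lintegral_indicator_one (hm s hA)]
    rfl
  rw [h1, ← key 0, ← lintegral_indicator_one hA]
  refine setLIntegral_congr_fun measurableSet_Ico ?_
  intro θ hθ
  simp only
  rw [add_zero, (toIcoMod_eq_self Real.two_pi_pos).2 (by simpa using hθ)]

lemma angle_prob : IsProbabilityMeasure angleUniform := by
  constructor
  simp only [angleUniform, Measure.smul_apply, Measure.restrict_apply MeasurableSet.univ,
    Set.univ_inter, Real.volume_Ico, sub_zero, smul_eq_mul]
  exact ENNReal.inv_mul_cancel (by simpa using Real.pi_pos) ENNReal.ofReal_ne_top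

lemma pair_lintegral (d : ℕ) (f : Fin d × Fin d → ℝ≥0∞) :
    ∫⁻ p, f p ∂(pairUniform d) =
      ((d * (d - 1) : ℕ) : ℝ≥0∞)⁻¹ * ∑ p ∈ (Finset.univ : Finset (Fin d)).offDiag, f p := by
  have h : {p : Fin d × Fin d | p.1 ≠ p.2} =
      (((Finset.univ : Finset (Fin d)).offDiag : Finset _) : Set (Fin d × Fin d)) := by
    ext p; simp
  rw [pairUniform, lintegral_smul_measure, h, lintegral_finset]
  simp

lemma pair_prob {d : ℕ} (hd : 2 ≤ d) : IsProbabilityMeasure (pairUniform d) := by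
  constructor
  have h := pair_lintegral d (fun _ => 1)
  rw [lintegral_one] at h
  rw [h, Finset.sum_const, Finset.offDiag_card, Finset.card_univ, Fintype.card_fin, nsmul_one,
    Nat.mul_sub, mul_one]
  refine ENNReal.inv_mul_cancel ?_ (by simp only [ne_eq, ENNReal.natCast_ne_top, not_false_eq_true])
  have : 0 < d * d - d := by
    have : d * 2 ≤ d * d := Nat.mul_le_mul_left d hd
    omega
  exact_mod_cast this.ne'

lemma kac_prob {d : ℕ} (hd : 2 ≤ d) : IsProbabilityMeasure (kacParam d) := by
  have := pair_prob hd
  have := angle_prob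
  unfold kacParam
  infer_instance

/-- Update variables. -/
abbrev Par (d : ℕ) := (Fin d × Fin d) × ℝ

/-- Pairs of states. -/
abbrev St (d : ℕ) := (Fin d → ℝ) × (Fin d → ℝ)

/-- Angle of the `(i,j)` components of `x`. -/
def ang {d : ℕ} (x : Fin d → ℝ) (p : Fin d × Fin d) : ℝ := Complex.arg ⟨x p.1, x p.2⟩

/-- Update variables used by the second walk. -/
def shiftPar {d : ℕ} (z : St d) (q : Par d) : Par d :=
  (q.1, toIcoMod Real.two_pi_pos 0 (q.2 + (ang z.1 q.1 - ang z.2 q.1)))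

/-- Rotation determined by update variables. -/
def rotP {d : ℕ} (q : Par d) : Matrix (Fin d) (Fin d) ℝ := rotM d q.1.1 q.1.2 q.2

/-- One step of the coupling. -/
def stepC {d : ℕ} (z : St d) (q : Par d) : St d :=
  ((rotP q).mulVec z.1, (rotP (shiftPar z q)).mulVec z.2)

lemma measurable_rotP {d : ℕ} (k l : Fin d) : Measurable (fun q : Par d => rotP q k l) := by
  refine measurable_from_prod_countable_right (fun p => ?_)
  simp only [rotP, rotM, Matrix.of_apply]
  split_ifs <;> fun_prop

lemma measurable_ang {d : ℕ} (p : Fin d × Fin d) : Measurable (fun x : Fin d → ℝ => ang x p) := by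
  unfold ang
  refine Complex.measurable_arg.comp ?_
  simp only [Complex.mk_eq_add_mul_I]
  fun_prop

lemma measurable_shift {d : ℕ} : Measurable (fun w : St d × Par d => shiftPar w.1 w.2) := by
  have h : Measurable (fun v : (Fin d × Fin d) × (St d × ℝ) =>
      shiftPar v.2.1 (v.1, v.2.2)) := by
    refine measurable_from_prod_countable_right (fun p => ?_)
    simp only [shiftPar, toIcoMod_eq_fract_mul]
    have := measurable_ang p
    fun_prop
  exact h.comp (g := fun v : (Fin d × Fin d) × (St d × ℝ) => shiftPar v.2.1 (v.1, v.2.2))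
    (f := fun w : St d × Par d => (w.2.1, (w.1, w.2.2))) (by fun_prop)

lemma measurable_stepC {d : ℕ} : Measurable (fun w : St d × Par d => stepC w.1 w.2) := by
  have h1 := fun k l : Fin d => measurable_rotP k l
  have h2 := measurable_shift (d := d)
  refine Measurable.prodMk ?_ ?_
  · refine measurable_pi_iff.2 fun k => ?_
    simp only [Matrix.mulVec, dotProduct]
    refine Finset.measurable_sum _ fun l _ => ?_
    exact ((h1 k l).comp measurable_snd).mul (by fun_prop)
  · refine measurable_pi_iff.2 fun k => ?_
    simp only [Matrix.mulVec, dotProduct]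
    refine Finset.measurable_sum _ fun l _ => ?_
    exact ((h1 k l).comp h2).mul (by fun_prop)

lemma shift_preserving {d : ℕ} (hd : 2 ≤ d) (z : St d) :
    MeasurePreserving (shiftPar z) (kacParam d) (kacParam d) := by
  have := pair_prob hd
  have := angle_prob
  have := (MeasurePreserving.id (pairUniform d)).skew_product (μc := angleUniform)
    (μd := angleUniform)
    (g := fun p θ => toIcoMod Real.two_pi_pos 0 (θ + (ang z.1 p - ang z.2 p))) ?_ ?_
  · exact this
  · exact (measurable_snd.comp (measurable_shift.comp (measurable_prodMk_left (x := z))))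
  · exact Filter.Eventually.of_forall fun p => (angle_preserving _).map_eq

/-- State after `T` steps. -/
def run {d : ℕ} : (T : ℕ) → St d → (Fin T → Par d) → St d
  | 0, z, _ => z
  | T + 1, z, ω => run T (stepC z (ω 0)) (Fin.tail ω)

/-- Update variables seen by the second walk. -/
def noise {d : ℕ} : (T : ℕ) → St d → (Fin T → Par d) → (Fin T → Par d)
  | 0, _, ω => ω
  | T + 1, z, ω => Fin.cons (shiftPar z (ω 0)) (noise T (stepC z (ω 0)) (Fin.tail ω))

lemma measurable_tail {d T : ℕ} : Measurable (fun ω : Fin (T + 1) → Par d => Fin.tail ω) :=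
  measurable_pi_iff.2 fun i => measurable_pi_apply i.succ

lemma measurable_run {d : ℕ} (T : ℕ) :
    Measurable (fun w : St d × (Fin T → Par d) => run T w.1 w.2) := by
  induction T with
  | zero => exact measurable_fst
  | succ T ih =>
    refine ih.comp (f := fun w : St d × (Fin (T + 1) → Par d) =>
      (stepC w.1 (w.2 0), Fin.tail w.2)) (Measurable.prodMk ?_ ?_)
    · exact measurable_stepC.comp (f := fun w : St d × (Fin (T + 1) → Par d) => (w.1, w.2 0))
        (by fun_prop)
    · exact measurable_tail.comp measurable_snd

lemma measurable_noise {d : ℕ} (T : ℕ) :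
    Measurable (fun w : St d × (Fin T → Par d) => noise T w.1 w.2) := by
  induction T with
  | zero => exact measurable_snd
  | succ T ih =>
    refine measurable_pi_iff.2 fun i => ?_
    have h0 : Measurable (fun w : St d × (Fin (T + 1) → Par d) => (w.1, w.2 0)) := by fun_prop
    refine Fin.cases ?_ (fun i => ?_) i
    · exact measurable_shift.comp h0
    · refine (measurable_pi_iff.1 ih i).comp (f := fun w : St d × (Fin (T + 1) → Par d) =>
        (stepC w.1 (w.2 0), Fin.tail w.2)) (Measurable.prodMk ?_ ?_)
      · exact measurable_stepC.comp h0
      · exact measurable_tail.comp measurable_snd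

lemma cons_preserving {d : ℕ} (hd : 2 ≤ d) (T : ℕ) :
    MeasurePreserving (fun w : Par d × (Fin T → Par d) =>
      (Fin.cons w.1 w.2 : Fin (T + 1) → Par d))
      ((kacParam d).prod (Measure.pi fun _ : Fin T => kacParam d))
      (Measure.pi fun _ : Fin (T + 1) => kacParam d) := by
  have := kac_prob hd
  have := (measurePreserving_piFinSuccAbove (fun _ : Fin (T + 1) => kacParam d) 0).symm
  convert! this using 1
  ext1 w
  simp [MeasurableEquiv.piFinSuccAbove, Fin.insertNthEquiv]

lemma uncons_preserving {d : ℕ} (hd : 2 ≤ d) (T : ℕ) :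
    MeasurePreserving (fun ω : Fin (T + 1) → Par d => (ω 0, Fin.tail ω))
      (Measure.pi fun _ : Fin (T + 1) => kacParam d)
      ((kacParam d).prod (Measure.pi fun _ : Fin T => kacParam d)) := by
  have := kac_prob hd
  exact (measurePreserving_piFinSuccAbove (fun _ : Fin (T + 1) => kacParam d) 0)

lemma noise_preserving {d : ℕ} (hd : 2 ≤ d) (T : ℕ) : ∀ z : St d,
    MeasurePreserving (noise T z) (Measure.pi fun _ : Fin T => kacParam d)
      (Measure.pi fun _ : Fin T => kacParam d) := by
  have := kac_prob hd
  induction T with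
  | zero => intro z; exact MeasurePreserving.id _
  | succ T ih =>
    intro z
    have h := (shift_preserving hd z).skew_product
      (μc := Measure.pi fun _ : Fin T => kacParam d)
      (μd := Measure.pi fun _ : Fin T => kacParam d)
      (g := fun q ω => noise T (stepC z q) ω) ?_
      (Filter.Eventually.of_forall fun q => (ih _).map_eq)
    · exact (cons_preserving hd T).comp (h.comp (uncons_preserving hd T))
    · refine (measurable_noise T).comp (f := fun w : Par d × (Fin T → Par d) =>
        (stepC z w.1, w.2)) (Measurable.prodMk ?_ measurable_snd)
      exact measurable_stepC.comp (f := fun w : Par d × (Fin T → Par d) => (z, w.1))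
        (by fun_prop)

lemma prodUpTo_zero {d T : ℕ} (ω : Fin T → Par d) : prodUpTo ω 0 = 1 := by
  simp [prodUpTo]

lemma prodUpTo_succ {d T : ℕ} (ω : Fin (T + 1) → Par d) (s : ℕ) :
    prodUpTo ω (s + 1) = prodUpTo (Fin.tail ω) s * rotP (ω 0) := by
  simp [prodUpTo, List.ofFn_succ, Fin.tail, rotP]

lemma measurable_prodUpTo {d : ℕ} (T : ℕ) : ∀ (s : ℕ) (k l : Fin d),
    Measurable (fun ω : Fin T → Par d => prodUpTo ω s k l) := by
  induction T with
  | zero => intro s k l; simp only [prodUpTo, List.ofFn_zero]; exact measurable_const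
  | succ T ih =>
    intro s k l
    cases s with
    | zero => simp only [prodUpTo_zero]; exact measurable_const
    | succ s =>
      simp only [prodUpTo_succ, Matrix.mul_apply]
      refine Finset.measurable_sum _ fun m _ => ?_
      exact ((ih s k m).comp measurable_tail).mul ((measurable_rotP m l).comp (by fun_prop))

lemma measurable_path {d : ℕ} (T : ℕ) (x : Fin d → ℝ) :
    Measurable (fun ω : Fin T → Par d =>
      fun s : Fin (T + 1) => (prodUpTo ω (s : ℕ)).mulVec x) := by
  refine measurable_pi_iff.2 fun s => measurable_pi_iff.2 fun k => ?_
  simp only [Matrix.mulVec, dotProduct]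
  exact Finset.measurable_sum _ fun m _ => (measurable_prodUpTo T s k m).mul measurable_const

lemma run_fst {d : ℕ} (s : ℕ) : ∀ (T : ℕ) (_ : s ≤ T) (z : St d) (ω : ℕ → Par d),
    (run s z (fun u => ω u)).1 = (prodUpTo (fun u : Fin T => ω u) s).mulVec z.1 := by
  induction s with
  | zero => intro T _ z ω; simp [run, prodUpTo_zero]
  | succ s ih =>
    intro T hT z ω
    obtain ⟨T, rfl⟩ : ∃ N, T = N + 1 := ⟨T - 1, by omega⟩
    rw [prodUpTo_succ, ← Matrix.mulVec_mulVec]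
    exact ih T (by omega) (stepC z (ω 0)) (fun n => ω (n + 1))

lemma run_snd {d : ℕ} (s : ℕ) : ∀ (T : ℕ) (_ : s ≤ T) (z : St d) (ω : ℕ → Par d),
    (run s z (fun u => ω u)).2 =
      (prodUpTo (noise T z (fun u : Fin T => ω u)) s).mulVec z.2 := by
  induction s with
  | zero => intro T _ z ω; simp [run, prodUpTo_zero]
  | succ s ih =>
    intro T hT z ω
    obtain ⟨T, rfl⟩ : ∃ N, T = N + 1 := ⟨T - 1, by omega⟩
    rw [prodUpTo_succ, ← Matrix.mulVec_mulVec]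
    exact ih T (by omega) (stepC z (ω 0)) (fun n => ω (n + 1))

/-- Squared distance of coordinate squares. -/
def dis {d : ℕ} (z : St d) : ℝ := ∑ i, (z.1 i ^ 2 - z.2 i ^ 2) ^ 2

lemma restr_preserving {d : ℕ} (hd : 2 ≤ d) (T : ℕ) :
    MeasurePreserving (fun (ω : ℕ → Par d) (u : Fin T) => ω u)
      (haveI := kac_prob hd; Measure.infinitePi fun _ : ℕ => kacParam d)
      (Measure.pi fun _ : Fin T => kacParam d) := by
  have := kac_prob hd
  refine ⟨by fun_prop, ?_⟩
  rw [Measure.map_infinitePi_infinitePi_of_inj (f := fun u : Fin T => (u : ℕ))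
    Fin.val_injective, Measure.infinitePi_eq_pi]

lemma sum_two {d : ℕ} {i j : Fin d} (hij : i ≠ j) (u v : ℝ) (f : Fin d → ℝ) :
    ∑ k, (if k = i then u else if k = j then v else f k) = ∑ k, f k - f i - f j + u + v := by
  have h : ∀ k, (if k = i then u else if k = j then v else f k) =
      f k + (if k = i then u - f i else 0) + (if k = j then v - f j else 0) := by
    intro k
    by_cases h1 : k = i
    · subst h1; simp [hij]
    · by_cases h2 : k = j
      · subst h2; simp [h1]
      · simp [h1, h2]
  rw [Finset.sum_congr rfl fun k _ => h k, Finset.sum_add_distrib, Finset.sum_add_distrib]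
  simp only [Finset.sum_ite_eq', Finset.mem_univ, if_true]
  ring

lemma rotM_mulVec {d : ℕ} {i j : Fin d} (hij : i ≠ j) (θ : ℝ) (x : Fin d → ℝ) (k : Fin d) :
    (rotM d i j θ).mulVec x k = if k = i then cos θ * x i - sin θ * x j
      else if k = j then sin θ * x i + cos θ * x j else x k := by
  simp only [Matrix.mulVec, dotProduct, rotM, Matrix.of_apply]
  by_cases h1 : k = i
  · subst h1
    have h : ∀ l, (if k = k ∧ l = k then cos θ else if k = k ∧ l = j then -sin θ
        else if k = j ∧ l = k then sin θ else if k = j ∧ l = j then cos θ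
        else if k = l then 1 else 0) * x l =
        (if l = k then cos θ * x l else 0) + (if l = j then -sin θ * x l else 0) := by
      intro l
      by_cases h2 : l = k
      · subst h2; simp [hij]
      · by_cases h3 : l = j
        · subst h3; simp [h2]
        · simp [h2, h3, hij, Ne.symm h2]
    rw [Finset.sum_congr rfl fun l _ => h l, Finset.sum_add_distrib]
    simp only [Finset.sum_ite_eq', Finset.mem_univ, if_true]
    ring
  · by_cases h2 : k = j
    · subst h2
      have h : ∀ l, (if k = i ∧ l = i then cos θ else if k = i ∧ l = k then -sin θ
          else if k = k ∧ l = i then sin θ else if k = k ∧ l = k then cos θ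
          else if k = l then 1 else 0) * x l =
          (if l = i then sin θ * x l else 0) + (if l = k then cos θ * x l else 0) := by
        intro l
        by_cases h2 : l = k
        · subst h2; simp [h1]
        · by_cases h3 : l = i
          · subst h3; simp [h1, Ne.symm h1]
          · simp [h2, h3, h1, Ne.symm h2]
      rw [Finset.sum_congr rfl fun l _ => h l, Finset.sum_add_distrib]
      simp [h1]
    · simp [h1, h2]

lemma rot_ang {d : ℕ} {i j : Fin d} (hij : i ≠ j) (α : ℝ) (θ : ℝ) (x : Fin d → ℝ)
    (hc : cos θ = cos (α - ang x (i, j))) (hs : sin θ = sin (α - ang x (i, j))) (k : Fin d) :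
    (rotM d i j θ).mulVec x k ^ 2 = if k = i then (x i ^ 2 + x j ^ 2) * cos α ^ 2
      else if k = j then (x i ^ 2 + x j ^ 2) * sin α ^ 2 else x k ^ 2 := by
  have e1 : ‖(⟨x i, x j⟩ : ℂ)‖ * cos (ang x (i, j)) = x i := Complex.norm_mul_cos_arg _
  have e2 : ‖(⟨x i, x j⟩ : ℂ)‖ * sin (ang x (i, j)) = x j := Complex.norm_mul_sin_arg _
  generalize ‖(⟨x i, x j⟩ : ℂ)‖ = r at e1 e2
  rw [rotM_mulVec hij, hc, hs, Real.cos_sub, Real.sin_sub, ← e1, ← e2]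
  generalize ang x (i, j) = φ at *
  have h := Real.sin_sq_add_cos_sq φ
  have h2 : sin φ ^ 2 = 1 - cos φ ^ 2 := by linarith
  split_ifs
  · have : (cos α * cos φ + sin α * sin φ) * (r * cos φ) -
        (sin α * cos φ - cos α * sin φ) * (r * sin φ) = r * cos α := by
      linear_combination r * cos α * h
    rw [this]
    linear_combination (- r ^ 2 * cos α ^ 2) * h
  · have : (sin α * cos φ - cos α * sin φ) * (r * cos φ) +
        (cos α * cos φ + sin α * sin φ) * (r * sin φ) = r * sin α := by
      linear_combination r * sin α * h
    rw [this]
    linear_combination (- r ^ 2 * sin α ^ 2) * h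
  · rfl

lemma step_fst {d : ℕ} {i j : Fin d} (hij : i ≠ j) (θ : ℝ) (z : St d) (k : Fin d) :
    (stepC z ((i, j), θ)).1 k ^ 2 =
      if k = i then (z.1 i ^ 2 + z.1 j ^ 2) * cos (θ + ang z.1 (i, j)) ^ 2
      else if k = j then (z.1 i ^ 2 + z.1 j ^ 2) * sin (θ + ang z.1 (i, j)) ^ 2
      else z.1 k ^ 2 := by
  exact rot_ang hij (θ + ang z.1 (i, j)) θ z.1 (by simp) (by simp) k

lemma step_snd {d : ℕ} {i j : Fin d} (hij : i ≠ j) (θ : ℝ) (z : St d) (k : Fin d) :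
    (stepC z ((i, j), θ)).2 k ^ 2 =
      if k = i then (z.2 i ^ 2 + z.2 j ^ 2) * cos (θ + ang z.1 (i, j)) ^ 2
      else if k = j then (z.2 i ^ 2 + z.2 j ^ 2) * sin (θ + ang z.1 (i, j)) ^ 2
      else z.2 k ^ 2 := by
  refine rot_ang hij (θ + ang z.1 (i, j)) _ z.2 ?_ ?_ k
  · simp only [shiftPar, toIcoMod]
    rw [zsmul_eq_mul, Real.cos_sub_int_mul_two_pi, add_sub_assoc]
  · simp only [shiftPar, toIcoMod]
    rw [zsmul_eq_mul, Real.sin_sub_int_mul_two_pi, add_sub_assoc]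

/-- Both components lie on the unit sphere. -/
def OnS {d : ℕ} (z : St d) : Prop := ∑ i, z.1 i ^ 2 = 1 ∧ ∑ i, z.2 i ^ 2 = 1

lemma step_onS {d : ℕ} {i j : Fin d} (hij : i ≠ j) (θ : ℝ) {z : St d} (hz : OnS z) :
    OnS (stepC z ((i, j), θ)) := by
  have h := Real.sin_sq_add_cos_sq (θ + ang z.1 (i, j))
  constructor
  · rw [Finset.sum_congr rfl fun k _ => step_fst hij θ z k,
      sum_two hij _ _ (fun k => z.1 k ^ 2), hz.1]
    linear_combination (z.1 i ^ 2 + z.1 j ^ 2) * h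
  · rw [Finset.sum_congr rfl fun k _ => step_snd hij θ z k,
      sum_two hij _ _ (fun k => z.2 k ^ 2), hz.2]
    linear_combination (z.2 i ^ 2 + z.2 j ^ 2) * h

/-- Difference of squares. -/
def dif {d : ℕ} (z : St d) (k : Fin d) : ℝ := z.1 k ^ 2 - z.2 k ^ 2

lemma step_dis {d : ℕ} {i j : Fin d} (hij : i ≠ j) (θ : ℝ) (z : St d) :
    dis (stepC z ((i, j), θ)) = dis z - dif z i ^ 2 - dif z j ^ 2 +
      (dif z i + dif z j) ^ 2 * (3 / 4 + cos (4 * θ + 4 * ang z.1 (i, j)) / 4) := by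
  have h : ∀ k, ((stepC z ((i, j), θ)).1 k ^ 2 - (stepC z ((i, j), θ)).2 k ^ 2) ^ 2 =
      if k = i then ((dif z i + dif z j) * cos (θ + ang z.1 (i, j)) ^ 2) ^ 2
      else if k = j then ((dif z i + dif z j) * sin (θ + ang z.1 (i, j)) ^ 2) ^ 2
      else (dif z k) ^ 2 := by
    intro k
    rw [step_fst hij, step_snd hij]
    unfold dif
    split_ifs <;> ring
  rw [dis, Finset.sum_congr rfl fun k _ => h k, sum_two hij _ _ (fun k => dif z k ^ 2)]
  have e : (4 * θ + 4 * ang z.1 (i, j)) = 2 * (2 * (θ + ang z.1 (i, j))) := by ring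
  rw [e, Real.cos_two_mul, Real.cos_two_mul]
  generalize θ + ang z.1 (i, j) = φ
  have h2 : sin φ ^ 2 = 1 - cos φ ^ 2 := by linarith [Real.sin_sq_add_cos_sq φ]
  rw [h2]
  unfold dis dif
  ring

lemma dis_nonneg {d : ℕ} (z : St d) : 0 ≤ dis z := Finset.sum_nonneg fun _ _ => sq_nonneg _

lemma measurable_dis {d : ℕ} : Measurable (fun z : St d => dis z) := by
  unfold dis; fun_prop

lemma angle_int {d : ℕ} {i j : Fin d} (hij : i ≠ j) (z : St d) :
    ∫⁻ θ, ENNReal.ofReal (dis (stepC z ((i, j), θ))) ∂angleUniform =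
      ENNReal.ofReal (dis z - dif z i ^ 2 - dif z j ^ 2 +
        (dif z i + dif z j) ^ 2 * (3 / 4)) := by
  have hc : Continuous (fun θ => dis (stepC z ((i, j), θ))) := by
    simp only [step_dis hij]; fun_prop
  have hi : IntegrableOn (fun θ => dis (stepC z ((i, j), θ))) (Set.Ico 0 (2 * π)) :=
    (hc.integrableOn_Icc).mono_set Set.Ico_subset_Icc_self
  rw [angleUniform, lintegral_smul_measure,
    ← ofReal_integral_eq_lintegral_ofReal hi (Filter.Eventually.of_forall fun _ => dis_nonneg _),
    smul_eq_mul, ← ENNReal.ofReal_inv_of_pos Real.two_pi_pos,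
    ← ENNReal.ofReal_mul (by positivity)]
  congr 1
  rw [integral_Ico_eq_integral_Ioc, ← intervalIntegral.integral_of_le Real.two_pi_pos.le]
  simp only [step_dis hij]
  generalize 4 * ang z.1 (i, j) = φ
  have hcos : ∫ θ in (0 : ℝ)..(2 * π), cos (4 * θ + φ) = 0 := by
    rw [intervalIntegral.integral_comp_mul_add _ (by norm_num), integral_cos]
    have : 4 * (2 * π) + φ = φ + (4 : ℕ) * (2 * π) := by push_cast; ring
    rw [this, Real.sin_add_nat_mul_two_pi]
    simp
  rw [intervalIntegral.integral_add (by simp) (Continuous.intervalIntegrable (by fun_prop) _ _),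
    intervalIntegral.integral_const_mul, intervalIntegral.integral_add (by simp)
      (Continuous.intervalIntegrable (by fun_prop) _ _), intervalIntegral.integral_div,
      intervalIntegral.integral_div, hcos]
  simp only [intervalIntegral.integral_const, smul_eq_mul]
  have := Real.pi_pos
  field_simp
  ring

lemma pair_alg {d : ℕ} (hd : 2 ≤ d) (a : Fin d → ℝ) (ha : ∑ i, a i = 0) (S : ℝ)
    (hS : S = ∑ i, a i ^ 2) :
    ∑ p ∈ (Finset.univ : Finset (Fin d)).offDiag, (S - a p.1 ^ 2 - a p.2 ^ 2 +
      (a p.1 + a p.2) ^ 2 * (3 / 4)) ≤ (d * (d - 1) : ℝ) * ((1 - 1 / (2 * d)) * S) := by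
  have hS0 : 0 ≤ S := by rw [hS]; exact Finset.sum_nonneg fun _ _ => sq_nonneg _
  have hd' : (2 : ℝ) ≤ d := by exact_mod_cast hd
  set g : Fin d × Fin d → ℝ := fun p => S - a p.1 ^ 2 - a p.2 ^ 2 +
      (a p.1 + a p.2) ^ 2 * (3 / 4) with hg
  have h1 : ∑ p ∈ (Finset.univ : Finset (Fin d)).diag, g p +
      ∑ p ∈ (Finset.univ : Finset (Fin d)).offDiag, g p = ∑ i, ∑ j, g (i, j) := by
    rw [← Finset.sum_union (Finset.disjoint_diag_offDiag _), Finset.diag_union_offDiag,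
      Finset.sum_product]
  have h2 : ∑ p ∈ (Finset.univ : Finset (Fin d)).diag, g p = d * S + S := by
    rw [Finset.sum_diag]
    have : ∀ i, g (i, i) = S + a i ^ 2 := by intro i; simp only [hg]; ring
    simp [this, Finset.sum_add_distrib, ← hS]
  have h3 : ∑ i, ∑ j, g (i, j) = d ^ 2 * S - d * S / 2 := by
    have : ∀ i j, g (i, j) = S - a i ^ 2 / 4 - a j ^ 2 / 4 + (3 / 2 * a i) * a j := by
      intro i j; simp only [hg]; ring
    simp only [this, Finset.sum_add_distrib, Finset.sum_sub_distrib, ← Finset.mul_sum, ha,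
      ← Finset.sum_div, ← hS, Finset.sum_const, Finset.card_univ, Fintype.card_fin, nsmul_eq_mul,
      mul_zero]
    ring
  have h4 : (d * (d - 1) : ℝ) * ((1 - 1 / (2 * d)) * S) = d ^ 2 * S - d * S * 3 / 2 + S / 2 := by
    field_simp; ring
  change ∑ p ∈ (Finset.univ : Finset (Fin d)).offDiag, g p ≤ _
  rw [h4]
  linarith

lemma one_step {d : ℕ} (hd : 2 ≤ d) {z : St d} (hz : OnS z) :
    ∫⁻ q, ENNReal.ofReal (dis (stepC z q)) ∂(kacParam d) ≤
      ENNReal.ofReal ((1 - 1 / (2 * d)) * dis z) := by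
  have := angle_prob
  have := pair_prob hd
  have hm : Measurable (fun q : Par d => ENNReal.ofReal (dis (stepC z q))) :=
    ENNReal.measurable_ofReal.comp (measurable_dis.comp
      (measurable_stepC.comp (measurable_prodMk_left (x := z))))
  rw [kacParam, lintegral_prod _ hm.aemeasurable, pair_lintegral]
  have hnn : ∀ p ∈ (Finset.univ : Finset (Fin d)).offDiag, 0 ≤ dis z - dif z p.1 ^ 2 -
      dif z p.2 ^ 2 + (dif z p.1 + dif z p.2) ^ 2 * (3 / 4) := by
    intro p hp
    have hij : p.1 ≠ p.2 := by simpa using hp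
    have h : dif z p.1 ^ 2 + dif z p.2 ^ 2 ≤ dis z := by
      rw [← Finset.sum_pair (f := fun k => dif z k ^ 2) hij]
      exact Finset.sum_le_sum_of_subset_of_nonneg (Finset.subset_univ _)
        fun _ _ _ => sq_nonneg _
    nlinarith [sq_nonneg (dif z p.1 + dif z p.2)]
  have e : ∀ p ∈ (Finset.univ : Finset (Fin d)).offDiag,
      ∫⁻ θ, ENNReal.ofReal (dis (stepC z (p, θ))) ∂angleUniform =
      ENNReal.ofReal (dis z - dif z p.1 ^ 2 - dif z p.2 ^ 2 +
        (dif z p.1 + dif z p.2) ^ 2 * (3 / 4)) := by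
    intro p hp
    have hij : p.1 ≠ p.2 := by simpa using hp
    exact angle_int hij z
  rw [Finset.sum_congr rfl e, ← ENNReal.ofReal_sum_of_nonneg hnn]
  have ha : ∑ i, dif z i = 0 := by
    simp only [dif, Finset.sum_sub_distrib, hz.1, hz.2, sub_self]
  have h := pair_alg hd (dif z) ha (dis z) rfl
  have hd1 : (2 : ℝ) ≤ d := by exact_mod_cast hd
  have hN : ((d * (d - 1) : ℕ) : ℝ≥0∞) = ENNReal.ofReal (d * (d - 1) : ℝ) := by
    rw [← ENNReal.ofReal_natCast]
    push_cast [Nat.cast_sub (by omega : 1 ≤ d)]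
    rfl
  have hpos : (0 : ℝ) < d * (d - 1) := by nlinarith
  rw [hN, ← ENNReal.ofReal_inv_of_pos hpos, ← ENNReal.ofReal_mul (by positivity)]
  refine ENNReal.ofReal_le_ofReal ?_
  rw [inv_mul_le_iff₀ hpos]
  exact h

lemma kac_ae {d : ℕ} (hd : 2 ≤ d) : ∀ᵐ q ∂(kacParam d), q.1.1 ≠ q.1.2 := by
  have := angle_prob
  have := pair_prob hd
  have h : ∀ᵐ p ∂(pairUniform d), p.1 ≠ p.2 := by
    refine Measure.ae_smul_measure ?_ _
    exact ae_restrict_mem (Set.toFinite _).measurableSet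
  exact (Measure.quasiMeasurePreserving_fst (μ := pairUniform d) (ν := angleUniform)).ae h

lemma fac_nonneg {d : ℕ} (hd : 2 ≤ d) : (0 : ℝ) ≤ 1 - 1 / (2 * d) := by
  have hd1 : (2 : ℝ) ≤ d := by exact_mod_cast hd
  rw [sub_nonneg, div_le_one (by linarith)]
  linarith

lemma contract {d : ℕ} (hd : 2 ≤ d) (T : ℕ) : ∀ z : St d, OnS z →
    ∫⁻ ω, ENNReal.ofReal (dis (run T z ω)) ∂(Measure.pi fun _ : Fin T => kacParam d) ≤
      ENNReal.ofReal ((1 - 1 / (2 * d)) ^ T * dis z) := by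
  have := kac_prob hd
  have hc := fac_nonneg hd
  induction T with
  | zero => intro z _; simp [run]
  | succ T ih =>
    intro z hz
    have hm : Measurable (fun w : Par d × (Fin T → Par d) =>
        ENNReal.ofReal (dis (run T (stepC z w.1) w.2))) := by
      refine ENNReal.measurable_ofReal.comp (measurable_dis.comp ((measurable_run T).comp
        (f := fun w : Par d × (Fin T → Par d) => (stepC z w.1, w.2))
        (Measurable.prodMk ?_ measurable_snd)))
      exact measurable_stepC.comp (f := fun w : Par d × (Fin T → Par d) => (z, w.1))
        (by fun_prop)
    have e := (uncons_preserving hd T).lintegral_comp hm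
    calc _ = _ := e
      _ = _ := lintegral_prod _ hm.aemeasurable
      _ ≤ ∫⁻ q, ENNReal.ofReal ((1 - 1 / (2 * d)) ^ T) * ENNReal.ofReal (dis (stepC z q))
            ∂(kacParam d) := by
          refine lintegral_mono_ae ?_
          filter_upwards [kac_ae hd] with q hq
          rw [← ENNReal.ofReal_mul (by positivity)]
          exact ih _ (step_onS hq q.2 hz)
      _ ≤ ENNReal.ofReal ((1 - 1 / (2 * d)) ^ T) *
            ENNReal.ofReal ((1 - 1 / (2 * d)) * dis z) := by
          rw [lintegral_const_mul' _ _ ENNReal.ofReal_ne_top]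
          gcongr
          exact one_step hd hz
      _ = _ := by
          rw [← ENNReal.ofReal_mul (by positivity), pow_succ, mul_assoc]

lemma sq_sum_le {d : ℕ} (x : Fin d → ℝ) (hx : ∑ i, x i ^ 2 = 1) : ∑ i, (x i ^ 2) ^ 2 ≤ 1 := by
  rw [← hx]
  refine Finset.sum_le_sum fun i _ => ?_
  have : x i ^ 2 ≤ 1 := by
    rw [← hx]
    exact Finset.single_le_sum (f := fun i => x i ^ 2) (fun _ _ => sq_nonneg _)
      (Finset.mem_univ i)
  nlinarith [sq_nonneg (x i)]

lemma dis_le_two {d : ℕ} {z : St d} (hz : OnS z) : dis z ≤ 2 := by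
  have h1 := sq_sum_le z.1 hz.1
  have h2 := sq_sum_le z.2 hz.2
  have : dis z ≤ ∑ i, ((z.1 i ^ 2) ^ 2 + (z.2 i ^ 2) ^ 2) := by
    refine Finset.sum_le_sum fun i _ => ?_
    nlinarith [mul_nonneg (sq_nonneg (z.1 i)) (sq_nonneg (z.2 i))]
  rw [Finset.sum_add_distrib] at this
  linarith

/-- **Lemma 3.3 (contractive coupling)**: two Kac walks on the sphere started at arbitrary
points can be coupled so that the expected squared difference of the coordinate squares
decays exponentially. -/
theorem kac_contractive_coupling
    {d : ℕ} (hd : 2 ≤ d) (X₀ Y₀ : Fin d → ℝ)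
    (hX₀ : ∑ i, X₀ i ^ 2 = 1) (hY₀ : ∑ i, Y₀ i ^ 2 = 1) :
    ∃ (Ω : Type) (_ : MeasurableSpace Ω) (μ : Measure Ω)
      (X Y : ℕ → Ω → Fin d → ℝ),
      IsProbabilityMeasure μ ∧
      (∀ ω, X 0 ω = X₀) ∧ (∀ ω, Y 0 ω = Y₀) ∧
      (∀ T : ℕ, Measure.map (fun ω => fun s : Fin (T + 1) => X (s : ℕ) ω) μ =
        kacPathLaw d T X₀) ∧
      (∀ T : ℕ, Measure.map (fun ω => fun s : Fin (T + 1) => Y (s : ℕ) ω) μ =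
        kacPathLaw d T Y₀) ∧
      ∀ t : ℕ,
        (∫ ω, ∑ i, (X t ω i ^ 2 - Y t ω i ^ 2) ^ 2 ∂μ) ≤ 2 * (1 - 1 / (2 * d)) ^ t ∧
        2 * (1 - 1 / (2 * d)) ^ t ≤ 2 * Real.exp (-(t : ℝ) / (2 * d)) := by
  have := kac_prob hd
  have hz : OnS (X₀, Y₀) := ⟨hX₀, hY₀⟩
  refine ⟨ℕ → Par d, inferInstance, Measure.infinitePi fun _ : ℕ => kacParam d,
    fun t ω => (run t (X₀, Y₀) (fun u => ω u)).1, fun t ω => (run t (X₀, Y₀) (fun u => ω u)).2,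
    inferInstance, fun _ => rfl, fun _ => rfl, ?_, ?_, ?_⟩
  · intro T
    have e : (fun (ω : ℕ → Par d) (s : Fin (T + 1)) =>
        (run (s : ℕ) (X₀, Y₀) (fun u => ω u)).1) =
        (fun (ω : Fin T → Par d) (s : Fin (T + 1)) => (prodUpTo ω (s : ℕ)).mulVec X₀) ∘
        (fun (ω : ℕ → Par d) (u : Fin T) => ω u) := by
      funext ω s
      exact run_fst s T (by omega) (X₀, Y₀) ω
    rw [e, ← Measure.map_map (measurable_path T X₀) (by fun_prop), (restr_preserving hd T).map_eq]
    rfl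
  · intro T
    have e : (fun (ω : ℕ → Par d) (s : Fin (T + 1)) =>
        (run (s : ℕ) (X₀, Y₀) (fun u => ω u)).2) =
        (fun (ω : Fin T → Par d) (s : Fin (T + 1)) => (prodUpTo ω (s : ℕ)).mulVec Y₀) ∘
        (noise T (X₀, Y₀) ∘ (fun (ω : ℕ → Par d) (u : Fin T) => ω u)) := by
      funext ω s
      exact run_snd s T (by omega) (X₀, Y₀) ω
    have hp := (noise_preserving hd T (X₀, Y₀)).comp (restr_preserving hd T)
    rw [e, ← Measure.map_map (measurable_path T Y₀) hp.measurable, hp.map_eq]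
    rfl
  · intro t
    have hc := fac_nonneg hd
    have hdm : Measurable (fun ω : Fin t → Par d => dis (run t (X₀, Y₀) ω)) :=
      measurable_dis.comp ((measurable_run t).comp (measurable_prodMk_left (x := (X₀, Y₀))))
    constructor
    · change ∫ ω : ℕ → Par d, dis (run t (X₀, Y₀) (fun u => ω u)) ∂_ ≤ _
      rw [integral_eq_lintegral_of_nonneg_ae
        (Filter.Eventually.of_forall fun _ => dis_nonneg _)
        (hdm.comp (restr_preserving hd t).measurable).aestronglyMeasurable]
      have e := (restr_preserving hd t).lintegral_comp
        (ENNReal.measurable_ofReal.comp hdm)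
      simp only [Function.comp_def] at e
      rw [e]
      refine ENNReal.toReal_le_of_le_ofReal (by positivity) ((contract hd t _ hz).trans ?_)
      refine ENNReal.ofReal_le_ofReal ?_
      rw [mul_comm]
      exact mul_le_mul_of_nonneg_right (dis_le_two hz) (by positivity)
    · have h : (1 : ℝ) - 1 / (2 * d) ≤ Real.exp (-(1 / (2 * d))) := by
        have := Real.add_one_le_exp (-(1 / (2 * d : ℝ)))
        linarith
      have h2 := pow_le_pow_left₀ hc h t
      rw [← Real.exp_nat_mul] at h2
      have e : (t : ℝ) * -(1 / (2 * d)) = -(t : ℝ) / (2 * d) := by ring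
      rw [e] at h2
      linarith

end KacJL
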